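/- (Karrass–Magnus–Solitar 1960, torsion criterion) Let A be a type and let w be a nontrivial, cyclically reduced element of FreeGroup A. The one-relator group G = ⟨A | w = 1⟩ has a nontrivial element of finite order if and only if w is a proper power, i.e. there exist r ∈ FreeGroup A and a natural number n ≥ 2 with w = rⁿ. -/

import Mathlib

/-- A word over `A` is cyclically reduced if its first and last letters are not
mutually inverse; an element of the free group is cyclically reduced if its
reduced word is. -/
def FreeGroup.CyclicallyReduced {A : Type*} [DecidableEq A] (w : FreeGroup A) : Prop :=
  ∀ x : A × Bool, w.toWord.head? = some x → w.toWord.getLast? ≠ some (x.1, !x.2)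

/-!
Magnus' method, by induction on the length of a cyclically reduced relator `w`. Give every letter a
rational weight so that the weighted exponent sum of `w` is zero and some letter `x` of `w` has
weight one. Reading a word while recording the weight reached so far (its level) embeds the free
group on `A` in `F ⋊ ℚ`, where `F` is free on letters with a level and `ℚ` translates the levels.
The image of `w` is a word in `F` that no longer involves `x`, hence is shorter, and its translates
form a staggered family of relators. By the Freiheitssatz for the shorter words, finitely many of
them define an iterated amalgamated product over free subgroups, in which torsion comes from the
factors. As `ℚ` is torsion-free, `⟨A | w⟩` is torsion-free if the one-relator groups of the shorter
words are, and these words are proper powers only if `w` is one. The Freiheitssatz and the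
nontriviality of the roots of `w` are carried along in the induction; if `w` is a power of a single
letter, everything is explicit.
-/

namespace OneRelator

open Subgroup

universe u

/-! ### Torsion in amalgamated products -/

section TorsionFree

variable {G H : Type*} [Group G] [Group H]

/-- A group is torsion-free if only its identity has finite order. For a nonabelian group this is
weaker than `IsMulTorsionFree`, which asks for uniqueness of roots. -/
def IsTorsionFree (G : Type*) [Group G] : Prop :=
  ∀ g : G, IsOfFinOrder g → g = 1

theorem IsTorsionFree.of_injective (hH : IsTorsionFree H) {f : G →* H}
    (hf : Function.Injective f) : IsTorsionFree G :=
  fun _ hg => hf ((hH _ (f.isOfFinOrder hg)).trans (map_one f).symm)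

theorem isTorsionFree_quotient_iff {N : Subgroup G} [N.Normal] :
    IsTorsionFree (G ⧸ N) ↔ ∀ (g : G) (k : ℕ), 0 < k → g ^ k ∈ N → g ∈ N := by
  simp only [IsTorsionFree, isOfFinOrder_iff_pow_eq_one, QuotientGroup.forall_mk,
    ← QuotientGroup.mk_pow, QuotientGroup.eq_one_iff, forall_exists_index, and_imp]

theorem IsTorsionFree.quotient_of_ker_eq (hH : IsTorsionFree H) {f : G →* H} {N : Subgroup G}
    [N.Normal] (hN : f.ker = N) : IsTorsionFree (G ⧸ N) := by
  subst hN
  exact hH.of_injective (QuotientGroup.kerLift_injective f)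

end TorsionFree

section Pushout

open Monoid

variable {ι : Type*} {G : ι → Type*} {H : Type*} [∀ i, Group (G i)] [Group H]
  {φ : ∀ i, H →* G i} {l l' : List (Σ i, G i)}

variable (φ) in
/-- The product in an amalgamated product of a list of syllables. No reducedness is required of the
list, so that lists can be concatenated and rotated freely. -/
def syllableProd (l : List (Σ i, G i)) : PushoutI φ :=
  (l.map fun p => PushoutI.of p.1 p.2).prod

@[simp]
theorem syllableProd_nil : syllableProd φ [] = 1 := rfl

@[simp]
theorem syllableProd_cons (p : Σ i, G i) :
    syllableProd φ (p :: l) = PushoutI.of p.1 p.2 * syllableProd φ l := by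
  simp [syllableProd]

@[simp]
theorem syllableProd_append : syllableProd φ (l ++ l') = syllableProd φ l * syllableProd φ l' := by
  simp [syllableProd]

theorem syllableProd_flatten_replicate (k : ℕ) :
    syllableProd φ (List.replicate k l).flatten = syllableProd φ l ^ k := by
  induction k with
  | zero => simp
  | succ k ih => simp [List.replicate_succ, ih, pow_succ']

theorem exists_syllableProd_eq [Nonempty ι] (g : PushoutI φ) : ∃ l, syllableProd φ l = g := by
  induction g using PushoutI.induction_on with
  | of i g => exact ⟨[⟨i, g⟩], by simp⟩
  | base h =>
    obtain ⟨i⟩ := ‹Nonempty ι›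
    exact ⟨[⟨i, φ i h⟩], by simp [PushoutI.of_apply_eq_base]⟩
  | mul x y hx hy =>
    obtain ⟨l, rfl⟩ := hx
    obtain ⟨m, rfl⟩ := hy
    exact ⟨l ++ m, syllableProd_append⟩

theorem isConj_syllableProd_of_isRotated (h : l ~r l') :
    IsConj (syllableProd φ l) (syllableProd φ l') := by
  obtain ⟨n, rfl⟩ := h
  rw [List.rotate_eq_drop_append_take_mod]
  nth_rw 1 [← List.take_append_drop (n % l.length) l]
  simp only [syllableProd_append]
  exact isConj_iff.2 ⟨(syllableProd φ (l.take (n % l.length)))⁻¹, by group⟩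

theorem exists_syllableProd_cons_cons_eq {a b : Σ i, G i} (h : a.2 ∈ (φ a.1).range ∨ a.1 = b.1)
    (l : List (Σ i, G i)) :
    ∃ c, syllableProd φ (a :: b :: l) = syllableProd φ (c :: l) := by
  obtain ⟨i, a⟩ := a
  obtain ⟨j, b⟩ := b
  obtain ⟨h, hh : φ i h = a⟩ | (rfl : i = j) := h
  · subst hh
    exact ⟨⟨j, φ j h * b⟩, by simp [PushoutI.of_apply_eq_base, mul_assoc]⟩
  · exact ⟨⟨i, a * b⟩, by simp [mul_assoc]⟩

variable (φ) in
/-- A list of syllables is cyclically reduced if, read cyclically, adjacent syllables come from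
different factors and no syllable lies in the amalgamated subgroup. A list of length at most one
has no adjacent syllables and is always cyclically reduced. -/
def IsCyclicallyReduced (l : List (Σ i, G i)) : Prop :=
  ∀ ⦃a b m⦄, l ~r a :: b :: m → a.2 ∉ (φ a.1).range ∧ a.1 ≠ b.1

theorem exists_isCyclicallyReduced_isConj [Nonempty ι] (g : PushoutI φ) :
    ∃ l, IsCyclicallyReduced φ l ∧ IsConj (syllableProd φ l) g := by
  obtain ⟨l, rfl⟩ := exists_syllableProd_eq g
  induction hn : l.length using Nat.strong_induction_on generalizing l with
  | _ n ih =>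
  by_cases hl : IsCyclicallyReduced φ l
  · exact ⟨l, hl, IsConj.refl _⟩
  obtain ⟨a, b, m, hrot, hab⟩ : ∃ a b m, l ~r a :: b :: m ∧
      (a.2 ∈ (φ a.1).range ∨ a.1 = b.1) := by
    simpa only [IsCyclicallyReduced, not_forall, exists_prop, not_and_or, not_not, ne_eq] using hl
  obtain ⟨c, hc⟩ := exists_syllableProd_cons_cons_eq hab m
  have hlen : (c :: m).length < n := by
    have := hrot.perm.length_eq
    simp only [List.length_cons] at this ⊢
    omega
  obtain ⟨l', hl', hconj⟩ := ih _ hlen _ rfl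
  exact ⟨l', hl', hconj.trans (hc ▸ (isConj_syllableProd_of_isRotated hrot).symm)⟩

theorem IsCyclicallyReduced.notMem_range (hl : IsCyclicallyReduced φ l) (h2 : 2 ≤ l.length)
    {p : Σ i, G i} (hp : p ∈ l) : p.2 ∉ (φ p.1).range := by
  obtain ⟨l₁, l₂, rfl⟩ := List.append_of_mem hp
  cases hm : l₂ ++ l₁ with
  | nil => simp_all
  | cons b m => exact (hl (by simpa [hm] using List.isRotated_append (l := l₁) (l' := p :: l₂))).1

theorem IsCyclicallyReduced.isChain_flatten_replicate (hl : IsCyclicallyReduced φ l)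
    (h2 : 2 ≤ l.length) (k : ℕ) :
    (List.replicate k l).flatten.IsChain fun a b => a.1 ≠ b.1 := by
  have hne : l ≠ [] := by rintro rfl; simp at h2
  rw [List.isChain_flatten (by simp [hne.symm])]
  constructor
  · intro m hm
    rw [List.eq_of_mem_replicate hm, List.isChain_iff_forall_rel_of_append_cons_cons]
    rintro a b l₁ l₂ rfl
    exact (hl (by simpa using List.isRotated_append (l := l₁) (l' := a :: b :: l₂))).2
  · refine List.isChain_replicate_of_rel _ fun a ha b hb => ?_
    obtain ⟨m, rfl⟩ := List.mem_getLast?_eq_getLast ha |>.elim fun h e =>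
      (⟨l.dropLast, by rw [e, List.dropLast_append_getLast h]⟩ : ∃ m, l = m ++ [a])
    obtain ⟨c, m, rfl⟩ := List.exists_cons_of_ne_nil (l := m) (by rintro rfl; simp at h2)
    obtain rfl : c = b := by simpa using hb
    exact (hl (by simpa using List.isRotated_append (l := c :: m) (l' := [a]))).2

theorem IsCyclicallyReduced.pow_ne_one (hl : IsCyclicallyReduced φ l)
    (hφ : ∀ i, Function.Injective (φ i)) (h2 : 2 ≤ l.length) {k : ℕ} (hk : 0 < k) :
    syllableProd φ l ^ k ≠ 1 := by
  intro hpow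
  have hrange : ∀ p ∈ (List.replicate k l).flatten, p.2 ∉ (φ p.1).range := by
    intro p hp
    obtain ⟨m, hm, hpm⟩ := List.mem_flatten.1 hp
    exact hl.notMem_range h2 (List.eq_of_mem_replicate hm ▸ hpm)
  let w : CoprodI.Word G :=
    ⟨(List.replicate k l).flatten, fun p hp h1 => hrange p hp (h1 ▸ one_mem _),
      hl.isChain_flatten_replicate h2 k⟩
  have hprod : PushoutI.ofCoprodI w.prod = (1 : PushoutI φ) := by
    rw [← hpow, ← syllableProd_flatten_replicate, CoprodI.Word.prod]
    simp [w, syllableProd, map_list_prod, Function.comp_def]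
  have hempty : w = .empty :=
    PushoutI.Reduced.eq_empty_of_mem_range hφ (w := w) hrange (hprod ▸ one_mem _)
  have hnil : (List.replicate k l).flatten = [] := congrArg CoprodI.Word.toList hempty
  have hlen := congrArg List.length hnil
  simp only [List.length_flatten, List.map_replicate, List.sum_replicate, smul_eq_mul,
    List.length_nil, mul_eq_zero] at hlen
  omega

theorem isTorsionFree_pushoutI [Nonempty ι] (hφ : ∀ i, Function.Injective (φ i))
    (hG : ∀ i, IsTorsionFree (G i)) : IsTorsionFree (PushoutI φ) := by
  intro g hg
  obtain ⟨l, hl, hconj⟩ := exists_isCyclicallyReduced_isConj g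
  have hfin : IsOfFinOrder (syllableProd φ l) := hconj.symm.isOfFinOrder hg
  suffices hone : syllableProd φ l = 1 by rwa [hone, isConj_one_right] at hconj
  match l with
  | [] => rfl
  | [p] =>
    rw [syllableProd_cons, syllableProd_nil, mul_one] at hfin ⊢
    rw [hG _ _ ((PushoutI.of_injective hφ p.1).isOfFinOrder_iff.1 hfin), map_one]
  | _ :: _ :: _ =>
    obtain ⟨k, hk, hpow⟩ := isOfFinOrder_iff_pow_eq_one.1 hfin
    exact absurd hpow (hl.pow_ne_one hφ (by simp) hk)

end Pushout

/-! ### Amalgamating presentations on overlapping alphabets -/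

section LetterSubgroup

variable {B : Type*} {S T : Set B}

/-- The free subgroup generated by a set of letters; the Freiheitssatz is the statement that it
meets the normal closure of the relator trivially for suitable sets of letters. -/
def letterSubgroup (S : Set B) : Subgroup (FreeGroup B) :=
  closure (FreeGroup.of '' S)

theorem letterSubgroup_mono (h : S ⊆ T) : letterSubgroup S ≤ letterSubgroup T :=
  closure_mono (Set.image_mono h)

theorem of_mem_letterSubgroup {b : B} (h : b ∈ S) : FreeGroup.of b ∈ letterSubgroup S :=
  subset_closure ⟨b, h, rfl⟩

theorem letterSubgroup_le {K : Subgroup (FreeGroup B)} :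
    letterSubgroup S ≤ K ↔ ∀ b ∈ S, FreeGroup.of b ∈ K := by
  rw [letterSubgroup, closure_le, Set.image_subset_iff]
  rfl

theorem mk_mem_letterSubgroup {L : List (B × Bool)} (h : ∀ l ∈ L, l.1 ∈ S) :
    FreeGroup.mk L ∈ letterSubgroup S := by
  induction L with
  | nil => exact one_mem _
  | cons l L ih =>
    rw [List.forall_mem_cons] at h
    rw [← List.singleton_append, ← FreeGroup.mul_mk]
    refine mul_mem ?_ (ih h.2)
    obtain ⟨b, _ | _⟩ := l
    · exact inv_mem (of_mem_letterSubgroup h.1)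
    · exact of_mem_letterSubgroup h.1

end LetterSubgroup

section LetterAmalgam

open Monoid

variable {ι B : Type*}

/-- The image of the letter subgroup of `S` in the group presented by the relators `U`. When `U`
only involves letters of `S` this is the group presented by `⟨S | U⟩`. -/
abbrev letterFactor (S : Set B) (U : Set (FreeGroup B)) :
    Subgroup (FreeGroup B ⧸ normalClosure U) :=
  (letterSubgroup S).map (QuotientGroup.mk' (normalClosure U))

/-- The projection of a letter subgroup onto its image modulo the relators `U`. -/
def toLetterFactor (S : Set B) (U : Set (FreeGroup B)) : letterSubgroup S →* letterFactor S U :=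
  (QuotientGroup.mk' (normalClosure U)).subgroupMap (letterSubgroup S)

theorem toLetterFactor_eq_one {S : Set B} {U : Set (FreeGroup B)} {g : letterSubgroup S} :
    toLetterFactor S U g = 1 ↔ (g : FreeGroup B) ∈ normalClosure U :=
  Subtype.ext_iff.trans (QuotientGroup.eq_one_iff _)

/-- The alphabets of the presentations `⟨S i | U i⟩` overlap pairwise exactly in the letters of `T`,
and these letters remain free in each of the groups presented; then `⟨B | ⋃ i, U i⟩` is the
amalgamated product of these groups over the free group on `T`. -/
structure IsLetterAmalgam (S : ι → Set B) (T : Set B) (U : ι → Set (FreeGroup B)) : Prop where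
  exists_mem : ∀ b, ∃ i, b ∈ S i
  subset : ∀ i, T ⊆ S i
  pairwise_inter_subset : Pairwise fun i j => S i ∩ S j ⊆ T
  relators_subset : ∀ i, U i ⊆ letterSubgroup (S i)
  disjoint : ∀ i, Disjoint (letterSubgroup T) (normalClosure (U i))

namespace IsLetterAmalgam

variable {S : ι → Set B} {T : Set B} {U : ι → Set (FreeGroup B)} (h : IsLetterAmalgam S T U)

/-- The inclusions of the free group on the common letters in the factors of the amalgam. -/
def baseMap (i : ι) : letterSubgroup T →* letterFactor (S i) (U i) :=
  (toLetterFactor (S i) (U i)).comp (inclusion (letterSubgroup_mono (h.subset i)))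

theorem baseMap_injective (i : ι) : Function.Injective (h.baseMap i) := by
  rw [injective_iff_map_eq_one]
  intro g hg
  have hgN : (g : FreeGroup B) ∈ normalClosure (U i) := (toLetterFactor_eq_one (S := S i)).1 hg
  exact Subtype.ext (disjoint_def.1 (h.disjoint i) g.2 hgN)

theorem exists_hom_pushoutI : ∃ ψ : FreeGroup B →* PushoutI h.baseMap,
    ∀ i (g : letterSubgroup (S i)), ψ g = PushoutI.of i (toLetterFactor (S i) (U i) g) := by
  choose c hc using h.exists_mem
  refine ⟨FreeGroup.lift fun b => PushoutI.of (c b)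
    (toLetterFactor (S (c b)) (U (c b)) ⟨_, of_mem_letterSubgroup (hc b)⟩), ?_⟩
  rintro i ⟨g, hg⟩
  dsimp only
  induction hg using closure_induction with
  | one => rw [map_one]; exact ((congrArg _ (map_one _)).trans (map_one _)).symm
  | mul x y hx hy ihx ihy => rw [map_mul, ihx, ihy, ← map_mul, ← map_mul]; rfl
  | inv x hx ih => rw [map_inv, ih, ← map_inv, ← map_inv]; rfl
  | mem x hx =>
    obtain ⟨b, hb, rfl⟩ := hx
    rw [FreeGroup.lift_apply_of]
    obtain rfl | hi := eq_or_ne (c b) i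
    · rfl
    · have hbT : b ∈ T := h.pairwise_inter_subset hi ⟨hc b, hb⟩
      have hbase := fun j =>
        PushoutI.of_apply_eq_base h.baseMap j ⟨_, of_mem_letterSubgroup hbT⟩
      exact (hbase (c b)).trans (hbase i).symm

variable {h} in
theorem ker_eq_normalClosure {ψ : FreeGroup B →* PushoutI h.baseMap}
    (hψ : ∀ i (g : letterSubgroup (S i)), ψ g = PushoutI.of i (toLetterFactor (S i) (U i) g)) :
    ψ.ker = normalClosure (⋃ i, U i) := by
  set N := normalClosure (⋃ i, U i)
  have hle (i : ι) : normalClosure (U i) ≤ N := normalClosure_mono (Set.subset_iUnion U i)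
  refine le_antisymm ?_ (normalClosure_le_normal (Set.iUnion_subset fun i u hu => ?_))
  · let back : PushoutI h.baseMap →* FreeGroup B ⧸ N :=
      PushoutI.lift
        (fun i => (QuotientGroup.map _ N (MonoidHom.id _) (hle i)).comp (Subgroup.subtype _))
        ((QuotientGroup.mk' N).comp (Subgroup.subtype _)) fun _ => rfl
    have hback : back.comp ψ = QuotientGroup.mk' N := by
      ext b
      obtain ⟨i, hi⟩ := h.exists_mem b
      rw [MonoidHom.comp_apply, hψ i ⟨_, of_mem_letterSubgroup hi⟩]
      rfl
    intro g hg
    rw [← QuotientGroup.ker_mk' N, ← hback, MonoidHom.mem_ker, MonoidHom.comp_apply,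
      MonoidHom.mem_ker.1 hg, map_one]
  · have hone := toLetterFactor_eq_one (g := ⟨u, h.relators_subset i hu⟩).2
      (subset_normalClosure hu)
    exact (hψ i ⟨u, h.relators_subset i hu⟩).trans (by rw [hone, map_one])

include h in
theorem inf_normalClosure_iUnion_le (i : ι) :
    letterSubgroup (S i) ⊓ normalClosure (⋃ i, U i) ≤ normalClosure (U i) := by
  obtain ⟨ψ, hψ⟩ := h.exists_hom_pushoutI
  rintro g ⟨hg, hgN⟩
  rw [← ker_eq_normalClosure hψ] at hgN
  have hof := (hψ i ⟨g, hg⟩).symm.trans (MonoidHom.mem_ker.1 hgN)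
  exact toLetterFactor_eq_one.1 (PushoutI.of_injective h.baseMap_injective i
    (hof.trans (map_one _).symm))

include h in
theorem isTorsionFree_quotient [Nonempty ι]
    (hU : ∀ i, IsTorsionFree (FreeGroup B ⧸ normalClosure (U i))) :
    IsTorsionFree (FreeGroup B ⧸ normalClosure (⋃ i, U i)) := by
  obtain ⟨ψ, hψ⟩ := h.exists_hom_pushoutI
  exact (isTorsionFree_pushoutI h.baseMap_injective fun i =>
    (hU i).of_injective (Subgroup.subtype_injective _)).quotient_of_ker_eq
      (ker_eq_normalClosure hψ)

end IsLetterAmalgam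

end LetterAmalgam

/-! ### Staggered families of relators -/

theorem mem_normalClosure_range_iff {G ι : Type*} [Group G] {w : ι → G} {g : G} :
    g ∈ normalClosure (Set.range w) ↔ ∃ s : Finset ι, g ∈ normalClosure (w '' s) := by
  classical
  have hconj : Group.conjugatesOfSet (Set.range w) =
      ⋃ s : Finset ι, Group.conjugatesOfSet (w '' s) := by
    ext x
    simp only [Group.mem_conjugatesOfSet_iff, Set.mem_iUnion, Set.exists_range_iff,
      Set.exists_mem_image]
    exact ⟨fun ⟨i, hi⟩ => ⟨{i}, i, by simp, hi⟩, fun ⟨_, i, _, hi⟩ => ⟨i, hi⟩⟩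
  rw [normalClosure, hconj, Subgroup.closure_iUnion]
  refine mem_iSup_of_directed (Monotone.directed_le fun s t hst => ?_)
  exact normalClosure_mono (Set.image_mono (Finset.coe_subset.2 hst))

section Staggered

open Set (Icc Ico Ici Iio Ioi)

variable {ι B Λ : Type*} {w : ι → FreeGroup B} {Y : Set B} {level : B → Λ} {lo hi : ι → Λ}

/-- The letters whose level lies in `I`, together with all letters outside `Y`: levels are only
taken into account for the letters in `Y`. -/
def lettersIn (Y : Set B) (level : B → Λ) (I : Set Λ) : Set B :=
  {b | b ∈ Y → level b ∈ I}

theorem lettersIn_mono {I J : Set Λ} (h : I ⊆ J) : lettersIn Y level I ⊆ lettersIn Y level J :=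
  fun _ hb hY => h (hb hY)

variable [LinearOrder ι] [LinearOrder Λ]

/-- A family of relators is staggered, with respect to the levels of the letters in `Y`, if the
`i`-th relator lives on the levels between `lo i` and `hi i`, these bounds move up with `i`, and
modulo the `i`-th relator there is no relation either among the letters of level below `hi i` or
among those of level above `lo i`. -/
structure IsStaggered (w : ι → FreeGroup B) (Y : Set B) (level : B → Λ) (lo hi : ι → Λ) :
    Prop where
  lo_strictMono : StrictMono lo
  hi_strictMono : StrictMono hi
  lo_le_hi : ∀ i, lo i ≤ hi i
  mem_letterSubgroup : ∀ i, w i ∈ letterSubgroup (lettersIn Y level (Icc (lo i) (hi i)))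
  disjoint_below : ∀ i,
    Disjoint (letterSubgroup (lettersIn Y level (Iio (hi i)))) (normalClosure {w i})
  disjoint_above : ∀ i,
    Disjoint (letterSubgroup (lettersIn Y level (Ioi (lo i)))) (normalClosure {w i})

namespace IsStaggered

variable (h : IsStaggered w Y level lo hi)
include h

theorem isLetterAmalgam {s : Finset ι} {i : ι} (his : ∀ j ∈ s, j < i)
    (hs : Disjoint (letterSubgroup (lettersIn Y level (Ico (lo i) (hi i))))
      (normalClosure (w '' s))) :
    IsLetterAmalgam (fun b : Bool => lettersIn Y level (cond b (Ici (lo i)) (Iio (hi i))))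
      (lettersIn Y level (Ico (lo i) (hi i))) (fun b => cond b {w i} (w '' s)) where
  exists_mem b := by
    by_cases hb : level b < hi i
    · exact ⟨false, fun _ => hb⟩
    · exact ⟨true, fun _ => (h.lo_le_hi i).trans (not_lt.1 hb)⟩
  subset := by
    rintro (_ | _)
    · exact lettersIn_mono fun _ hx => hx.2
    · exact lettersIn_mono fun _ hx => hx.1
  pairwise_inter_subset := by
    rintro (_ | _) (_ | _) hne
    · exact absurd rfl hne
    · exact fun _ hb hY => ⟨hb.2 hY, hb.1 hY⟩
    · exact fun _ hb hY => ⟨hb.1 hY, hb.2 hY⟩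
    · exact absurd rfl hne
  relators_subset := by
    rintro (_ | _)
    · rintro _ ⟨j, hj, rfl⟩
      exact letterSubgroup_mono
        (lettersIn_mono fun _ hx => hx.2.trans_lt (h.hi_strictMono (his j hj)))
        (h.mem_letterSubgroup j)
    · exact Set.singleton_subset_iff.2
        (letterSubgroup_mono (lettersIn_mono fun _ hx => hx.1) (h.mem_letterSubgroup i))
  disjoint := by
    rintro (_ | _)
    · exact hs
    · exact (h.disjoint_below i).mono_left
        (letterSubgroup_mono (lettersIn_mono fun _ hx => hx.2))

theorem disjoint_normalClosure_finset {s : Finset ι} {I : Set Λ}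
    (hI : ∀ i ∈ s, I ⊆ Iio (hi i) ∨ I ⊆ Ioi (lo i)) :
    Disjoint (letterSubgroup (lettersIn Y level I)) (normalClosure (w '' s)) := by
  induction s using Finset.induction_on_max generalizing I with
  | empty => simp
  | insert i s his ih =>
    have hs := h.isLetterAmalgam his (ih fun j hj => .inr fun x hx =>
      (h.lo_strictMono (his j hj)).trans_le hx.1)
    rw [Finset.coe_insert, Set.image_insert_eq, Set.insert_eq, Set.union_eq_iUnion, disjoint_def]
    intro g hg hgN
    rw [Finset.forall_mem_insert] at hI
    obtain hlow | hhigh := hI.1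
    · exact disjoint_def.1 (ih hI.2) hg (hs.inf_normalClosure_iUnion_le false
        ⟨letterSubgroup_mono (lettersIn_mono hlow) hg, hgN⟩)
    · exact disjoint_def.1 (h.disjoint_above i) (letterSubgroup_mono (lettersIn_mono hhigh) hg)
        (hs.inf_normalClosure_iUnion_le true ⟨letterSubgroup_mono
          (lettersIn_mono (hhigh.trans Set.Ioi_subset_Ici_self)) hg, hgN⟩)

theorem isLetterAmalgam_of_forall_lt {s : Finset ι} {i : ι} (his : ∀ j ∈ s, j < i) :
    IsLetterAmalgam (fun b : Bool => lettersIn Y level (cond b (Ici (lo i)) (Iio (hi i))))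
      (lettersIn Y level (Ico (lo i) (hi i))) (fun b => cond b {w i} (w '' s)) :=
  h.isLetterAmalgam his <| h.disjoint_normalClosure_finset fun j hj => .inr fun _ hx =>
    (h.lo_strictMono (his j hj)).trans_le hx.1

theorem inf_normalClosure_finset_le {s : Finset ι} {i : ι} (his : i ∈ s) :
    letterSubgroup (lettersIn Y level (Icc (lo i) (hi i))) ⊓ normalClosure (w '' s) ≤
      normalClosure {w i} := by
  induction s using Finset.induction_on_max with
  | empty => simp at his
  | insert j s hjs ih =>
    have hs := h.isLetterAmalgam_of_forall_lt hjs
    rw [Finset.coe_insert, Set.image_insert_eq, Set.insert_eq, Set.union_eq_iUnion]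
    rintro g ⟨hg, hgN⟩
    obtain rfl | hi' := Finset.mem_insert.1 his
    · exact hs.inf_normalClosure_iUnion_le true
        ⟨letterSubgroup_mono (lettersIn_mono Set.Icc_subset_Ici_self) hg, hgN⟩
    · exact ih hi' ⟨hg, hs.inf_normalClosure_iUnion_le false ⟨letterSubgroup_mono
        (lettersIn_mono fun _ hx => hx.2.trans_lt (h.hi_strictMono (hjs i hi'))) hg, hgN⟩⟩

theorem isTorsionFree_quotient_finset
    (hw : ∀ i, IsTorsionFree (FreeGroup B ⧸ normalClosure {w i})) (s : Finset ι) :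
    IsTorsionFree (FreeGroup B ⧸ normalClosure (w '' s)) := by
  induction s using Finset.induction_on_max with
  | empty =>
    rw [isTorsionFree_quotient_iff]
    intro g k hk hg
    simp only [Finset.coe_empty, Set.image_empty, normalClosure_empty, mem_bot] at hg ⊢
    exact (pow_eq_one_iff_left hk.ne').1 hg
  | insert i s his ih =>
    rw [Finset.coe_insert, Set.image_insert_eq, Set.insert_eq, Set.union_eq_iUnion]
    exact (h.isLetterAmalgam_of_forall_lt his).isTorsionFree_quotient (Bool.rec ih (hw i))

theorem disjoint_normalClosure {I : Set Λ} (hI : ∀ i, I ⊆ Iio (hi i) ∨ I ⊆ Ioi (lo i)) :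
    Disjoint (letterSubgroup (lettersIn Y level I)) (normalClosure (Set.range w)) := by
  rw [disjoint_def]
  intro g hg hgN
  obtain ⟨s, hs⟩ := mem_normalClosure_range_iff.1 hgN
  exact disjoint_def.1 (h.disjoint_normalClosure_finset fun i _ => hI i) hg hs

theorem inf_normalClosure_le (i : ι) :
    letterSubgroup (lettersIn Y level (Icc (lo i) (hi i))) ⊓ normalClosure (Set.range w) ≤
      normalClosure {w i} := by
  rintro g ⟨hg, hgN⟩
  obtain ⟨s, hs⟩ := mem_normalClosure_range_iff.1 hgN
  refine h.inf_normalClosure_finset_le (Finset.mem_insert_self i s) ⟨hg, ?_⟩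
  exact normalClosure_mono (Set.image_mono (Finset.coe_subset.2 (Finset.subset_insert i s))) hs

theorem isTorsionFree_quotient
    (hw : ∀ i, IsTorsionFree (FreeGroup B ⧸ normalClosure {w i})) :
    IsTorsionFree (FreeGroup B ⧸ normalClosure (Set.range w)) := by
  rw [isTorsionFree_quotient_iff]
  intro g k hk hg
  obtain ⟨s, hs⟩ := mem_normalClosure_range_iff.1 hg
  exact mem_normalClosure_range_iff.2
    ⟨s, isTorsionFree_quotient_iff.1 (h.isTorsionFree_quotient_finset hw s) g k hk hs⟩

end IsStaggered

end Staggered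

/-! ### One-relator groups as subgroups of semidirect products -/

theorem normalClosure_singleton_inl {N H : Type*} [Group N] [Group H] {φ : H →* MulAut N} (n : N) :
    normalClosure {(SemidirectProduct.inl n : N ⋊[φ] H)} =
      (normalClosure (Set.range fun h => φ h n)).map SemidirectProduct.inl := by
  have hinv (h : H) {u : N} (hu : u ∈ normalClosure (Set.range fun h => φ h n)) :
      φ h u ∈ normalClosure (Set.range fun h => φ h n) := by
    have hmap := map_normalClosure (Set.range fun h => φ h n) (φ h).toMonoidHom (φ h).surjective
    refine normalClosure_mono ?_ (hmap ▸ mem_map_of_mem (φ h).toMonoidHom hu)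
    rintro _ ⟨_, ⟨k, rfl⟩, rfl⟩
    exact ⟨h * k, by simp⟩
  refine le_antisymm ?_ (map_le_iff_le_comap.2 ?_)
  · have : ((normalClosure (Set.range fun h => φ h n)).map
        (SemidirectProduct.inl : N →* N ⋊[φ] H)).Normal := by
      constructor
      rintro _ ⟨u, hu, rfl⟩ g
      refine ⟨g.left * φ g.right u * g.left⁻¹, ?_, by ext <;> simp⟩
      exact normalClosure_normal.conj_mem _ (hinv _ hu) _
    refine normalClosure_le_normal (Set.singleton_subset_iff.2 (mem_map_of_mem _ ?_))
    exact subset_normalClosure ⟨1, by simp⟩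
  · refine normalClosure_le_normal ?_
    rintro _ ⟨h, rfl⟩
    rw [SetLike.mem_coe, mem_comap, SemidirectProduct.inl_aut, map_inv]
    exact normalClosure_normal.conj_mem _ (subset_normalClosure (Set.mem_singleton _)) _

theorem exists_embedding_rat {G : Type u} [Group G] {x : G} (hx : ¬ IsOfFinOrder x) :
    ∃ (M : Type u) (_ : Group M) (j : G →* M) (c : Multiplicative ℚ →* M),
      Function.Injective j ∧ c (.ofAdd 1) = j x := by
  let φ : ∀ _ : Bool, Multiplicative ℤ →* G × Multiplicative ℚ := fun b =>
    cond b (zpowersHom _ (x, 1)) (zpowersHom _ (1, .ofAdd 1))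
  have hφ : ∀ b, Function.Injective (φ b) := by
    rintro (_ | _) m n hmn
    · simpa [φ, ← ofAdd_zsmul] using congrArg Prod.snd hmn
    · exact Multiplicative.toAdd.injective (injective_zpow_iff_not_isOfFinOrder.2 hx
        (by simpa [φ] using congrArg Prod.fst hmn))
  refine ⟨Monoid.PushoutI φ, inferInstance, (Monoid.PushoutI.of true).comp (MonoidHom.inl _ _),
    (Monoid.PushoutI.of false).comp (MonoidHom.inr _ _),
    (Monoid.PushoutI.of_injective hφ true).comp (Prod.mk_left_injective 1), ?_⟩
  simpa [φ] using (Monoid.PushoutI.of_apply_eq_base φ false (.ofAdd 1)).trans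
    (Monoid.PushoutI.of_apply_eq_base φ true (.ofAdd 1)).symm

theorem not_isOfFinOrder_of {A : Type*} (a : A) : ¬ IsOfFinOrder (FreeGroup.of a) := fun h =>
  FreeGroup.of_ne_one a ((isOfFinOrder_iff_eq_one _).1 h)

/-- The action of the rationals by translation on the letters of `A × ℚ`, the second component of a
letter being its level. -/
def shift (A : Type*) : Multiplicative ℚ →* MulAut (FreeGroup (A × ℚ)) where
  toFun q := FreeGroup.freeGroupCongr ((Equiv.refl A).prodCongr (Equiv.addLeft q.toAdd))
  map_one' := by
    apply MulEquiv.toMonoidHom_injective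
    ext b
    simp
  map_mul' p q := by
    apply MulEquiv.toMonoidHom_injective
    ext b
    simp [Prod.map, add_assoc]

@[simp]
theorem shift_of {A : Type*} (q : Multiplicative ℚ) (b : A × ℚ) :
    shift A q (FreeGroup.of b) = FreeGroup.of (b.1, q.toAdd + b.2) := by
  simp [shift, Prod.map]

/-- The free group on letters with a rational level, extended by the translations of the levels. -/
abbrev LevelGroup (A : Type*) :=
  FreeGroup (A × ℚ) ⋊[shift A] Multiplicative ℚ

section LevelHom

variable {A : Type u} [DecidableEq A] {x : A} {f : A → ℚ}

variable (x f) in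
/-- The letter `x` acts as the translation by `f x`, and any other letter `a` becomes the letter `a`
at level `0` followed by the translation by `f a`. This plays the role of the Moldavanskii rewriting
of a word with exponent sum zero in `x`; allowing rational weights `f` makes it available for every
word involving at least two letters. -/
def levelHom : FreeGroup A →* LevelGroup A :=
  FreeGroup.lift fun a => ⟨if a = x then 1 else FreeGroup.of (a, 0), .ofAdd (f a)⟩

theorem exists_extend_levelHom (hf : f x = 1) {G : Type u} [Group G] {φ : FreeGroup A →* G}
    (hx : ¬ IsOfFinOrder (φ (FreeGroup.of x))) :
    ∃ (M : Type u) (_ : Group M) (j : G →* M) (Φ : LevelGroup A →* M),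
      Function.Injective j ∧ Φ.comp (levelHom x f) = j.comp φ := by
  obtain ⟨M, _, j, c, hj, hc⟩ := exists_embedding_rat hx
  let F : FreeGroup (A × ℚ) →* M := FreeGroup.lift fun b =>
    if b.1 = x then 1 else c (.ofAdd b.2) * j (φ (FreeGroup.of b.1)) *
      (c (.ofAdd (f b.1)))⁻¹ * (c (.ofAdd b.2))⁻¹
  let Φ : LevelGroup A →* M := SemidirectProduct.lift F c <| by
    intro q
    ext b
    simp only [MonoidHom.comp_apply, MulEquiv.coe_toMonoidHom, shift_of, F,
      FreeGroup.lift_apply_of, MulAut.conj_apply]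
    split_ifs
    · simp
    · rw [ofAdd_add, map_mul, ofAdd_toAdd]
      group
  refine ⟨M, inferInstance, j, Φ, hj, FreeGroup.ext_hom _ _ fun a => ?_⟩
  simp only [MonoidHom.comp_apply, levelHom, FreeGroup.lift_apply_of]
  rw [SemidirectProduct.mk_eq_inl_mul_inr, map_mul]
  simp only [Φ, SemidirectProduct.lift_inl, SemidirectProduct.lift_inr]
  split_ifs with ha
  · rw [ha, hf, hc, map_one, one_mul]
  · simp [F, ha]

theorem levelHom_injective (hf : f x = 1) : Function.Injective (levelHom x f) := by
  obtain ⟨M, _, j, Φ, hj, hΦ⟩ :=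
    exists_extend_levelHom hf (φ := MonoidHom.id (FreeGroup A)) (not_isOfFinOrder_of x)
  refine .of_comp (f := Φ) ?_
  rw [← MonoidHom.coe_comp, hΦ]
  exact hj

theorem comap_levelHom_normalClosure (hf : f x = 1) {w : FreeGroup A}
    (hx : ¬ IsOfFinOrder (FreeGroup.of x : FreeGroup A ⧸ normalClosure {w})) :
    (normalClosure {levelHom x f w}).comap (levelHom x f) = normalClosure {w} := by
  refine le_antisymm ?_ (normalClosure_le_normal
    (Set.singleton_subset_iff.2 (subset_normalClosure rfl)))
  obtain ⟨M, _, j, Φ, hj, hΦ⟩ := exists_extend_levelHom hf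
    (φ := QuotientGroup.mk' (normalClosure {w})) hx
  have hw : QuotientGroup.mk' (normalClosure {w}) w = 1 :=
    (QuotientGroup.eq_one_iff w).2 (subset_normalClosure (Set.mem_singleton w))
  have hker : normalClosure {levelHom x f w} ≤ Φ.ker := by
    refine normalClosure_le_normal (Set.singleton_subset_iff.2 ?_)
    rw [SetLike.mem_coe, MonoidHom.mem_ker, ← MonoidHom.comp_apply, hΦ, MonoidHom.comp_apply,
      hw, map_one]
  intro g hg
  have hone : j (QuotientGroup.mk' (normalClosure {w}) g) = 1 := by
    rw [← MonoidHom.comp_apply, ← hΦ]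
    exact hker hg
  exact (QuotientGroup.eq_one_iff g).1 ((map_eq_one_iff j hj).1 hone)

theorem levelHom_left_mem {S : Set A} {g : FreeGroup A} (hg : g ∈ letterSubgroup S) :
    (levelHom x f g).left ∈ letterSubgroup {b : A × ℚ | b.1 ∈ S} := by
  have hshift (q : Multiplicative ℚ) : letterSubgroup {b : A × ℚ | b.1 ∈ S} ≤
      (letterSubgroup {b : A × ℚ | b.1 ∈ S}).comap (shift A q).toMonoidHom :=
    letterSubgroup_le.2 fun b hb => by
      rw [mem_comap, MulEquiv.coe_toMonoidHom, shift_of]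
      exact of_mem_letterSubgroup hb
  induction hg using closure_induction with
  | mem g hg =>
    obtain ⟨a, ha, rfl⟩ := hg
    simp only [levelHom, FreeGroup.lift_apply_of]
    split_ifs
    · exact one_mem _
    · exact of_mem_letterSubgroup ha
  | one => rw [map_one]; exact one_mem _
  | mul g h _ _ hg hh =>
    rw [map_mul, SemidirectProduct.mul_left]
    exact mul_mem hg (hshift _ hh)
  | inv g _ hg =>
    rw [map_inv, SemidirectProduct.inv_left]
    exact hshift _ (inv_mem hg)

theorem exists_levelHom_eq_inl (hf : ∀ a ≠ x, f a = 0) {g : FreeGroup A}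
    (hg : g ∈ letterSubgroup {x}ᶜ) :
    ∃ u ∈ letterSubgroup {b : A × ℚ | b.2 = 0}, SemidirectProduct.inl u = levelHom x f g := by
  have hle : letterSubgroup {x}ᶜ ≤ ((letterSubgroup {b : A × ℚ | b.2 = 0}).map
      (SemidirectProduct.inl : FreeGroup (A × ℚ) →* LevelGroup A)).comap (levelHom x f) := by
    refine letterSubgroup_le.2 fun a (ha : a ≠ x) =>
      ⟨FreeGroup.of (a, 0), of_mem_letterSubgroup rfl, ?_⟩
    simp only [levelHom, FreeGroup.lift_apply_of, if_neg ha, hf a ha]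
    rfl
  exact hle hg

end LevelHom

/-! ### Rewriting words -/

section Words

variable {A : Type u}

/-- The contribution of a letter to the weight of a word. -/
def letterWeight (f : A → ℚ) (l : A × Bool) : ℚ :=
  if l.2 then f l.1 else -f l.1

/-- The exponent sum of a word, where the letter `a` counts with weight `f a`. -/
def weight (f : A → ℚ) (L : List (A × Bool)) : ℚ :=
  (L.map (letterWeight f)).sum

/-- The letter with a level that stands for the letter `l` read at level `s`. An inverse letter gets
the level reached after reading it, so that reading a letter and then its inverse cancels. -/
def rewriteLetter (f : A → ℚ) (s : ℚ) (l : A × Bool) : (A × ℚ) × Bool :=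
  ((l.1, if l.2 then s else s - f l.1), l.2)

/-- The word obtained by reading `L` from level `s` on: every letter moves the level by its weight,
and the letters `x` have no other effect. -/
def rewrite [DecidableEq A] (x : A) (f : A → ℚ) : ℚ → List (A × Bool) → List ((A × ℚ) × Bool)
  | _, [] => []
  | s, l :: L => if l.1 = x then rewrite x f (s + letterWeight f l) L
      else rewriteLetter f s l :: rewrite x f (s + letterWeight f l) L

variable {x : A} {f : A → ℚ} {s s' : ℚ} {l l' : A × Bool} {L p t : List (A × Bool)}

@[simp]
theorem weight_nil : weight f [] = 0 := rfl

@[simp]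
theorem weight_cons : weight f (l :: L) = letterWeight f l + weight f L := by
  simp [weight]

@[simp]
theorem weight_append : weight f (p ++ t) = weight f p + weight f t := by
  simp [weight]

theorem rewriteLetter_inj :
    rewriteLetter f s l = rewriteLetter f s' l' ↔ s = s' ∧ l = l' := by
  obtain ⟨a, _ | _⟩ := l <;> obtain ⟨b, _ | _⟩ := l' <;> simp [rewriteLetter] <;> grind

theorem eq_zero_of_rewriteLetter_fst_eq {u : ℚ} (hl : l.2 ≠ l'.2)
    (h : (rewriteLetter f s l).1 = (rewriteLetter f (s + letterWeight f l + u) l').1) : u = 0 := by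
  obtain ⟨a, _ | _⟩ := l <;> obtain ⟨b, _ | _⟩ := l' <;>
    simp_all [rewriteLetter, letterWeight] <;> grind

theorem rewriteLetter_level_of_eq_zero (h : f l.1 = 0) : (rewriteLetter f s l).1.2 = s := by
  simp [rewriteLetter, h]

theorem exists_mk_eq_zpow (f : A → ℚ) (hL : ∀ l ∈ L, l.1 = x) :
    ∃ m : ℤ, FreeGroup.mk L = FreeGroup.of x ^ m ∧ weight f L = m * f x := by
  induction L with
  | nil => exact ⟨0, rfl, by simp⟩
  | cons l L ih =>
    obtain ⟨hl, hL⟩ := List.forall_mem_cons.1 hL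
    obtain ⟨m, hm, hweight⟩ := ih hL
    rw [← List.singleton_append, ← FreeGroup.mul_mk, hm]
    obtain ⟨a, _ | _⟩ := l
    · refine ⟨-1 + m, ?_, ?_⟩
      · rw [zpow_add, zpow_neg_one, ← hl]; rfl
      · simp [hweight, letterWeight, ← hl]; ring
    · refine ⟨1 + m, ?_, ?_⟩
      · rw [zpow_add, zpow_one, ← hl]; rfl
      · simp [hweight, letterWeight, ← hl]; ring

theorem eq_nil_of_weight_eq_zero (hf : f x ≠ 0) (hL : FreeGroup.IsReduced L)
    (hx : ∀ l ∈ L, l.1 = x) (h0 : weight f L = 0) : L = [] := by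
  classical
  obtain ⟨m, hm, hweight⟩ := exists_mk_eq_zpow f hx
  obtain rfl : m = 0 := by simpa [h0, hf] using hweight
  rw [← hL.reduce_eq, ← FreeGroup.toWord_mk, hm, zpow_zero, FreeGroup.toWord_one]

variable [DecidableEq A]

theorem rewrite_append : rewrite x f s (p ++ t) =
    rewrite x f s p ++ rewrite x f (s + weight f p) t := by
  induction p generalizing s with
  | nil => simp [rewrite]
  | cons l p ih =>
    simp only [List.cons_append, rewrite, weight_cons, ih, add_assoc]
    split_ifs <;> rfl

theorem rewrite_add (q : ℚ) : rewrite x f (q + s) L =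
    (rewrite x f s L).map fun b => ((b.1.1, q + b.1.2), b.2) := by
  induction L generalizing s with
  | nil => rfl
  | cons l L ih =>
    simp only [rewrite, add_assoc, ih]
    split_ifs <;> simp [rewriteLetter, add_sub_assoc, apply_ite (q + ·)]

theorem length_rewrite_le : (rewrite x f s L).length ≤ L.length := by
  induction L generalizing s with
  | nil => rfl
  | cons l L ih =>
    rw [rewrite]
    split_ifs
    · exact ih.trans (Nat.le_succ _)
    · exact Nat.succ_le_succ ih

theorem length_rewrite_lt (h : ∃ l ∈ L, l.1 = x) : (rewrite x f s L).length < L.length := by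
  obtain ⟨l, hl, hlx⟩ := h
  obtain ⟨p, t, rfl⟩ := List.append_of_mem hl
  simp only [rewrite_append, rewrite, hlx, if_true, List.length_append, List.length_cons]
  exact add_lt_add_of_le_of_lt length_rewrite_le (Nat.lt_succ_of_le length_rewrite_le)

theorem exists_mem_rewrite (hl : l ∈ L) (hx : l.1 ≠ x) :
    ∃ b ∈ rewrite x f s L, b.1.1 = l.1 := by
  obtain ⟨p, t, rfl⟩ := List.append_of_mem hl
  exact ⟨rewriteLetter f (s + weight f p) l, by simp [rewrite_append, rewrite, hx], rfl⟩

theorem eq_of_rewrite_eq_nil (h : rewrite x f s L = []) : ∀ l ∈ L, l.1 = x := by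
  intro l hl
  by_contra hx
  obtain ⟨b, hb, -⟩ := exists_mem_rewrite (f := f) (s := s) hl hx
  simp [h] at hb

theorem exists_of_rewrite_eq_append_cons {b : (A × ℚ) × Bool} {R R' : List ((A × ℚ) × Bool)}
    (h : rewrite x f s L = R ++ b :: R') :
    ∃ p l t, L = p ++ l :: t ∧ rewrite x f s p = R ∧ l.1 ≠ x ∧
      rewriteLetter f (s + weight f p) l = b ∧
      rewrite x f (s + weight f p + letterWeight f l) t = R' := by
  induction L generalizing s R with
  | nil => simp [rewrite] at h
  | cons l L ih =>
    rw [rewrite] at h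
    split_ifs at h with hl
    · obtain ⟨p, m, t, rfl, hp, hm, hb, ht⟩ := ih h
      exact ⟨l :: p, m, t, rfl, by rw [rewrite, if_pos hl, hp], hm,
        by rw [weight_cons, ← add_assoc, hb], by rw [weight_cons, ← add_assoc, ht]⟩
    · obtain - | ⟨c, R⟩ := R
      · obtain ⟨hb, ht⟩ := List.cons.inj h
        exact ⟨[], l, L, rfl, rfl, hl, by simpa using hb, by simpa using ht⟩
      · obtain ⟨hc, ht⟩ := List.cons.inj h
        obtain ⟨p, m, t, rfl, hp, hm, hb, ht⟩ := ih ht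
        exact ⟨l :: p, m, t, rfl, by rw [rewrite, if_neg hl, hp, hc], hm,
          by rw [weight_cons, ← add_assoc, hb], by rw [weight_cons, ← add_assoc, ht]⟩

theorem exists_of_rewrite_eq_cons {b : (A × ℚ) × Bool} {R : List ((A × ℚ) × Bool)}
    (h : rewrite x f s L = b :: R) :
    ∃ p l t, L = p ++ l :: t ∧ (∀ m ∈ p, m.1 = x) ∧ l.1 ≠ x ∧
      rewriteLetter f (s + weight f p) l = b ∧
      rewrite x f (s + weight f p + letterWeight f l) t = R := by
  obtain ⟨p, l, t, hL, hp, hl, hb, ht⟩ := exists_of_rewrite_eq_append_cons (R := []) h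
  exact ⟨p, l, t, hL, eq_of_rewrite_eq_nil hp, hl, hb, ht⟩

/-- A cancellation `b b⁻¹` in the rewritten word comes from letters of `L` that are separated by a
power of `x` leaving the level unchanged, that is, by nothing. -/
theorem isReduced_rewrite (hf : f x ≠ 0) (hL : FreeGroup.IsReduced L) :
    FreeGroup.IsReduced (rewrite x f s L) := by
  rw [FreeGroup.IsReduced, List.isChain_iff_forall_rel_of_append_cons_cons]
  intro b c R R' h hbc
  obtain ⟨p, l, t, rfl, -, -, rfl, ht⟩ := exists_of_rewrite_eq_append_cons h
  obtain ⟨m, l', t, rfl, hm, -, rfl, -⟩ := exists_of_rewrite_eq_cons ht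
  by_contra hne
  have hm0 : weight f m = 0 := eq_zero_of_rewriteLetter_fst_eq (l := l) (l' := l') hne hbc
  obtain rfl : m = [] :=
    eq_nil_of_weight_eq_zero hf (hL.infix ⟨p ++ [l], l' :: t, by simp⟩) hm hm0
  have hll' : FreeGroup.IsReduced [l, l'] := hL.infix ⟨p, t, by simp⟩
  rw [FreeGroup.IsReduced, List.isChain_pair] at hll'
  exact hne (hll' (Prod.ext_iff.1 hbc).1)

theorem isCyclicallyReduced_rewrite (hf : f x ≠ 0) (hL : FreeGroup.IsCyclicallyReduced L)
    (h0 : weight f L = 0) : FreeGroup.IsCyclicallyReduced (rewrite x f s L) := by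
  have hLL : FreeGroup.IsReduced (L ++ L) := by
    simpa [List.replicate_succ] using (hL.flatten_replicate 2).isReduced
  have hRR := isReduced_rewrite (s := s) hf hLL
  rw [rewrite_append, h0, add_zero, FreeGroup.IsReduced, List.isChain_append] at hRR
  exact ⟨hRR.1, hRR.2.2⟩

theorem forall_ne_of_rewrite_level_eq (hfx : f x ≠ 0) (hf : ∀ a ≠ x, f a = 0)
    (hL : FreeGroup.IsReduced L) (h0 : weight f L = 0)
    (hs : ∀ b ∈ rewrite x f s L, b.1.2 = s) : ∀ l ∈ L, l.1 ≠ x := by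
  induction L with
  | nil => simp
  | cons l L ih =>
    by_cases hl : l.1 = x
    · cases hR : rewrite x f s (l :: L) with
      | nil => cases eq_nil_of_weight_eq_zero hfx hL (eq_of_rewrite_eq_nil hR) h0
      | cons b R =>
        obtain ⟨p, m, t, hLp, hp, hm, rfl, -⟩ := exists_of_rewrite_eq_cons hR
        have hps := hs _ (hR ▸ List.mem_cons_self)
        rw [rewriteLetter_level_of_eq_zero (hf _ hm), add_eq_left] at hps
        obtain rfl := eq_nil_of_weight_eq_zero hfx (hL.infix ⟨[], m :: t, hLp.symm⟩) hp hps
        obtain ⟨rfl, rfl⟩ := List.cons.inj hLp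
        exact absurd hl hm
    · have hl0 : letterWeight f l = 0 := by simp [letterWeight, hf _ hl]
      rw [rewrite, if_neg hl, hl0, add_zero, List.forall_mem_cons] at hs
      rw [weight_cons, hl0, zero_add] at h0
      exact List.forall_mem_cons.2 ⟨hl, ih (hL.infix ⟨[l], [], by simp⟩) h0 hs.2⟩

theorem exists_rewrite_level_ne (hfx : f x ≠ 0) (hf : ∀ a ≠ x, f a = 0)
    (hL : FreeGroup.IsCyclicallyReduced L) (h0 : weight f L = 0) (hx : ∃ l ∈ L, l.1 = x)
    (hy : ∃ l ∈ L, l.1 ≠ x) :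
    ∃ b ∈ rewrite x f s L, ∃ c ∈ rewrite x f s L, b.1.2 ≠ c.1.2 := by
  by_contra! hconst
  obtain ⟨a, ha, hax⟩ := hy
  obtain ⟨P, Q, rfl⟩ := List.append_of_mem ha
  have hrot : FreeGroup.IsReduced (a :: Q ++ P) :=
    (hL.flatten_replicate 2).isReduced.infix ⟨P, a :: Q, by simp [List.replicate_succ]⟩
  have hrot0 : weight f (a :: Q ++ P) = 0 := by
    rw [weight_append, add_comm, ← weight_append, h0]
  have hmem : ∀ b, b ∈ rewrite x f (s + weight f P) (a :: Q ++ P) ↔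
      b ∈ rewrite x f s (P ++ a :: Q) := by
    intro b
    rw [rewrite_append, rewrite_append, add_assoc, ← weight_append, h0, add_zero,
      List.mem_append, List.mem_append, or_comm]
  have hlevel : (rewriteLetter f (s + weight f P) a).1.2 = s + weight f P :=
    rewriteLetter_level_of_eq_zero (hf _ hax)
  have ha : rewriteLetter f (s + weight f P) a ∈ rewrite x f s (P ++ a :: Q) := by
    simp [rewrite_append, rewrite, hax]
  obtain ⟨l, hl, hlx⟩ := hx
  refine forall_ne_of_rewrite_level_eq hfx hf hrot hrot0
    (fun b hb => (hconst b ((hmem b).1 hb) _ ha).trans hlevel) l ?_ hlx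
  rwa [List.mem_append, or_comm, ← List.mem_append]

end Words

/-! ### Relators with weighted exponent sum zero -/

/-- An element of a monoid is a proper power if it is `r ^ n` for some `n ≥ 2`. The identity counts
as a proper power. -/
def IsProperPower {G : Type*} [Monoid G] (g : G) : Prop :=
  ∃ (r : G) (n : ℕ), 2 ≤ n ∧ g = r ^ n

theorem eq_flatten_replicate_toWord {B : Type*} [DecidableEq B] {R : List (B × Bool)}
    (hR : FreeGroup.IsCyclicallyReduced R) {r : FreeGroup B} {n : ℕ} (hn : n ≠ 0)
    (h : FreeGroup.mk R = r ^ n) : R = (List.replicate n r.toWord).flatten := by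
  have hword := congrArg FreeGroup.toWord h
  rw [FreeGroup.toWord_mk, hR.isReduced.reduce_eq, FreeGroup.toWord_pow,
    FreeGroup.reduceCyclically.reduce_flatten_replicate FreeGroup.isReduced_toWord,
    if_neg hn] at hword
  have hr := FreeGroup.reduceCyclically.conj_conjugator_reduceCyclically r.toWord
  cases hc : FreeGroup.reduceCyclically.conjugator r.toWord with
  | nil =>
    simp only [hc, FreeGroup.invRev_empty, List.nil_append, List.append_nil] at hr hword
    rw [hword, hr]
  | cons c C =>
    rw [hc, FreeGroup.invRev, List.map_cons, List.reverse_cons, ← List.append_assoc] at hword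
    have hlast : (c.1, !c.2) ∈ R.getLast? := hword ▸ List.getLast?_concat
    have hhead : c ∈ R.head? := by simp [hword]
    simpa using hR.2 _ hlast _ hhead rfl

theorem shift_symm_of {A : Type*} (q : Multiplicative ℚ) (b : A × ℚ) :
    (shift A q).symm (FreeGroup.of b) = FreeGroup.of (b.1, -q.toAdd + b.2) :=
  (MulEquiv.symm_apply_eq _).2 (by simp)

section Relators

variable {A : Type u} [DecidableEq A] {x y : A} {f : A → ℚ} {L : List (A × Bool)}

theorem inr_mul_levelHom_mk_singleton (s : ℚ) (l : A × Bool) :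
    SemidirectProduct.inr (.ofAdd s) * levelHom x f (FreeGroup.mk [l]) =
      (⟨FreeGroup.mk (rewrite x f s [l]), .ofAdd (s + letterWeight f l)⟩ : LevelGroup A) := by
  have hof {B : Type u} (b : B) : FreeGroup.mk [(b, true)] = FreeGroup.of b := rfl
  have hinv {B : Type u} (b : B) : FreeGroup.mk [(b, false)] = (FreeGroup.of b)⁻¹ := rfl
  obtain ⟨a, _ | _⟩ := l
  · simp only [levelHom, hinv, map_inv, FreeGroup.lift_apply_of, rewrite, rewriteLetter,
      letterWeight, Bool.false_eq_true, if_false]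
    split_ifs <;> ext <;>
      simp [SemidirectProduct.inv_left, ofAdd_add, sub_eq_add_neg, shift_symm_of, hinv,
        ← FreeGroup.one_eq_mk]
  · simp only [levelHom, hof, FreeGroup.lift_apply_of, rewrite, rewriteLetter, letterWeight]
    split_ifs <;> ext <;> simp [ofAdd_add, hof, ← FreeGroup.one_eq_mk]

theorem inr_mul_levelHom_mk (s : ℚ) (L : List (A × Bool)) :
    SemidirectProduct.inr (.ofAdd s) * levelHom x f (FreeGroup.mk L) =
      (⟨FreeGroup.mk (rewrite x f s L), .ofAdd (s + weight f L)⟩ : LevelGroup A) := by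
  induction L generalizing s with
  | nil => simp [rewrite, ← FreeGroup.one_eq_mk]
  | cons l L ih =>
    rw [← List.singleton_append, ← FreeGroup.mul_mk, map_mul, ← mul_assoc,
      inr_mul_levelHom_mk_singleton, SemidirectProduct.mk_eq_inl_mul_inr, mul_assoc, ih,
      rewrite_append, ← FreeGroup.mul_mk]
    ext <;> simp [add_assoc]

theorem levelHom_mk (h0 : weight f L = 0) :
    levelHom x f (FreeGroup.mk L) = .inl (FreeGroup.mk (rewrite x f 0 L)) := by
  simpa [h0] using inr_mul_levelHom_mk (x := x) (f := f) 0 L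

theorem shift_mk_rewrite (q s : ℚ) :
    shift A (.ofAdd q) (FreeGroup.mk (rewrite x f s L)) =
      FreeGroup.mk (rewrite x f (q + s) L) := by
  rw [rewrite_add]
  rfl

theorem normalClosure_levelHom_mk (h0 : weight f L = 0) :
    normalClosure {levelHom x f (FreeGroup.mk L)} =
      (normalClosure (Set.range fun q : ℚ => FreeGroup.mk (rewrite x f q L))).map
        SemidirectProduct.inl := by
  have hrange : (Set.range fun h => shift A h (FreeGroup.mk (rewrite x f 0 L))) =
      Set.range fun q : ℚ => FreeGroup.mk (rewrite x f q L) :=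
    (Multiplicative.ofAdd.surjective.range_comp _).symm.trans
      (congrArg Set.range (funext fun q => by simp [shift_mk_rewrite]))
  rw [levelHom_mk h0, normalClosure_singleton_inl, hrange]

theorem IsProperPower.of_mk_rewrite (hf : f x = 1) (hL : FreeGroup.IsCyclicallyReduced L)
    (h0 : weight f L = 0) {q : ℚ} (h : IsProperPower (FreeGroup.mk (rewrite x f q L))) :
    IsProperPower (FreeGroup.mk L) := by
  have hfx : f x ≠ 0 := hf ▸ one_ne_zero
  obtain ⟨r, n, hn, hr⟩ := h
  have hword := eq_flatten_replicate_toWord (isCyclicallyReduced_rewrite hfx hL h0) (by omega) hr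
  obtain ⟨m, rfl⟩ := Nat.exists_eq_add_of_le' hn
  simp only [List.replicate_succ, List.flatten_cons] at hword
  cases hW : r.toWord with
  | nil =>
    have hL0 : L = [] := eq_nil_of_weight_eq_zero hfx hL.isReduced
      (eq_of_rewrite_eq_nil (s := q) (by simpa [hW] using hword)) h0
    exact ⟨1, 2, le_rfl, by rw [hL0, one_pow]; rfl⟩
  | cons b W =>
    obtain ⟨p, l, t, -, hp, -, hb, -⟩ := exists_of_rewrite_eq_append_cons (R := [])
      (hword.trans (by rw [hW]; rfl))
    obtain ⟨p', l', t', -, hp', -, hb', -⟩ := exists_of_rewrite_eq_append_cons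
      (hword.trans (by nth_rw 2 [hW]; rfl))
    have hweight : weight f p = weight f p' :=
      add_left_cancel (rewriteLetter_inj.1 (hb.trans hb'.symm)).1
    have hroot : MulAut.conj (SemidirectProduct.inr (.ofAdd q))
        (levelHom x f (FreeGroup.mk p' * (FreeGroup.mk p)⁻¹)) = SemidirectProduct.inl r := by
      rw [MulAut.conj_apply, map_mul, map_inv, ← mul_assoc, mul_inv_eq_iff_eq_mul,
        mul_inv_eq_iff_eq_mul, mul_assoc, inr_mul_levelHom_mk, inr_mul_levelHom_mk, hp, hp',
        FreeGroup.mk_toWord, hweight]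
      ext <;> simp [← FreeGroup.one_eq_mk]
    refine ⟨FreeGroup.mk p' * (FreeGroup.mk p)⁻¹, m + 2, hn, levelHom_injective hf ?_⟩
    apply (MulAut.conj (SemidirectProduct.inr (.ofAdd q))).injective
    rw [map_pow, map_pow, hroot, ← map_pow, ← hr, MulAut.conj_apply, inr_mul_levelHom_mk, h0,
      add_zero, SemidirectProduct.mk_eq_inl_mul_inr, mul_inv_cancel_right]

end Relators

/-! ### The induction on the length of the relator -/

section Induction

variable {A : Type u} {x y : A} {f : A → ℚ} {L : List (A × Bool)}

/-- The properties of the one-relator group `⟨A | L⟩` that are established simultaneously: the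
letters other than a given letter of `L` generate a free subgroup, the group is torsion-free unless
`L` is a proper power, and the roots of `L` are nontrivial. -/
structure IsMagnusRelator (L : List (A × Bool)) : Prop where
  freiheitssatz : ∀ l ∈ L, Disjoint (letterSubgroup {l.1}ᶜ) (normalClosure {FreeGroup.mk L})
  isTorsionFree : ¬ IsProperPower (FreeGroup.mk L) →
    IsTorsionFree (FreeGroup A ⧸ normalClosure {FreeGroup.mk L})
  root_notMem : ∀ (r : FreeGroup A) (n : ℕ), 2 ≤ n → FreeGroup.mk L = r ^ n →
    r ∉ normalClosure {FreeGroup.mk L}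

/-- The retraction of a free group that kills the letter `x`. -/
def eraseLetter [DecidableEq A] (x : A) : FreeGroup A →* FreeGroup A :=
  FreeGroup.lift fun a => if a = x then 1 else FreeGroup.of a

theorem eraseLetter_of_self [DecidableEq A] : eraseLetter x (FreeGroup.of x) = 1 := by
  simp [eraseLetter]

theorem normalClosure_zpow_le_ker_eraseLetter [DecidableEq A] (m : ℤ) :
    normalClosure {FreeGroup.of x ^ m} ≤ (eraseLetter x).ker :=
  normalClosure_le_normal <| Set.singleton_subset_iff.2 <| by
    rw [SetLike.mem_coe, MonoidHom.mem_ker, map_zpow, eraseLetter_of_self, one_zpow]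

theorem disjoint_letterSubgroup_normalClosure_zpow (m : ℤ) :
    Disjoint (letterSubgroup {x}ᶜ) (normalClosure {FreeGroup.of x ^ m}) := by
  classical
  have hfix : letterSubgroup {x}ᶜ ≤ (eraseLetter x).eqLocus (MonoidHom.id _) :=
    letterSubgroup_le.2 fun a (ha : a ≠ x) =>
      (FreeGroup.lift_apply_of ..).trans (if_neg ha)
  exact disjoint_def.2 fun {g} hg hgN =>
    (hfix hg).symm.trans (normalClosure_zpow_le_ker_eraseLetter m hgN)

theorem ker_eraseLetter [DecidableEq A] {m : ℤ} (hm : IsUnit m) :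
    (eraseLetter x).ker = normalClosure {FreeGroup.of x ^ m} := by
  refine le_antisymm (fun g hg => ?_) (normalClosure_zpow_le_ker_eraseLetter m)
  have hx : FreeGroup.of x ∈ normalClosure {FreeGroup.of x ^ m} := by
    have hmem := zpow_mem (subset_normalClosure (Set.mem_singleton (FreeGroup.of x ^ m))) m
    rwa [← zpow_mul, Int.isUnit_mul_self hm, zpow_one] at hmem
  have hmk : (QuotientGroup.mk' (normalClosure {FreeGroup.of x ^ m})).comp (eraseLetter x) =
      QuotientGroup.mk' _ := by
    ext a
    simp only [MonoidHom.comp_apply, eraseLetter, FreeGroup.lift_apply_of]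
    split_ifs with ha
    · rw [ha, map_one]
      exact ((QuotientGroup.eq_one_iff _).2 hx).symm
    · rfl
  rw [← QuotientGroup.eq_one_iff, ← QuotientGroup.mk'_apply, ← hmk, MonoidHom.comp_apply, hg,
    map_one]

theorem isTorsionFree_quotient_normalClosure_zpow {m : ℤ} (hm : m ≠ 0)
    (h : ¬ IsProperPower (FreeGroup.of x ^ m)) :
    IsTorsionFree (FreeGroup A ⧸ normalClosure {FreeGroup.of x ^ m}) := by
  classical
  have hunit : IsUnit m := by
    rw [Int.isUnit_iff_natAbs_eq]
    by_contra hm1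
    refine h ⟨FreeGroup.of x ^ m.sign, m.natAbs, by omega, ?_⟩
    rw [← zpow_natCast, ← zpow_mul, Int.sign_mul_natAbs]
  refine IsTorsionFree.quotient_of_ker_eq ?_ (ker_eraseLetter hunit)
  exact fun g => (isOfFinOrder_iff_eq_one g).1

theorem notMem_normalClosure_pow {G : Type*} [Group G] {r : G} (χ : G →* Multiplicative ℤ)
    (hr : χ r ≠ 1) {n : ℕ} (hn : 2 ≤ n) : r ∉ normalClosure {r ^ n} := by
  intro hmem
  have hle : normalClosure {r ^ n} ≤ (zpowers (χ (r ^ n))).comap χ :=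
    normalClosure_le_normal (Set.singleton_subset_iff.2 (mem_zpowers _))
  obtain ⟨k, hk⟩ := hle hmem
  have hkn : k * n * (χ r).toAdd = 1 * (χ r).toAdd := by
    simpa [mul_assoc] using congrArg Multiplicative.toAdd hk
  have hdvd : (n : ℤ) ∣ 1 := ⟨k, by rw [mul_comm, mul_right_cancel₀ hr hkn]⟩
  have := Int.le_of_dvd one_pos hdvd
  omega

theorem isMagnusRelator_of_forall_eq (hL : FreeGroup.IsReduced L) (hne : L ≠ [])
    (hx : ∀ l ∈ L, l.1 = x) : IsMagnusRelator L := by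
  obtain ⟨m, hm, hweight⟩ := exists_mk_eq_zpow 1 hx
  have hm0 : m ≠ 0 := by
    rintro rfl
    exact hne (eq_nil_of_weight_eq_zero (f := 1) one_ne_zero hL hx (by simpa using hweight))
  refine ⟨fun l hl => ?_, fun h => ?_, fun r n hn hr => ?_⟩
  · rw [hm, hx l hl]
    exact disjoint_letterSubgroup_normalClosure_zpow m
  · rw [hm] at h ⊢
    exact isTorsionFree_quotient_normalClosure_zpow hm0 h
  · rw [hr]
    refine notMem_normalClosure_pow (FreeGroup.lift fun _ => .ofAdd 1) (fun h1 => hm0 ?_) hn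
    have hχ := congrArg (FreeGroup.lift fun _ => Multiplicative.ofAdd (1 : ℤ)) (hm.symm.trans hr)
    rw [map_pow, h1, one_pow] at hχ
    simpa [← ofAdd_zsmul] using hχ

theorem exists_level_bounds {Y : Set A} {R : List ((A × ℚ) × Bool)} (hY : ∃ b ∈ R, b.1.1 ∈ Y) :
    ∃ b ∈ R, b.1.1 ∈ Y ∧ ∃ c ∈ R, c.1.1 ∈ Y ∧
      ∀ d ∈ R, d.1.1 ∈ Y → d.1.2 ∈ Set.Icc b.1.2 c.1.2 := by
  classical
  obtain ⟨a, ha, haY⟩ := hY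
  have hS : (R.toFinset.filter (·.1.1 ∈ Y)).Nonempty := ⟨a, by simp [ha, haY]⟩
  obtain ⟨b, hb, hmin⟩ := Finset.exists_min_image _ (·.1.2) hS
  obtain ⟨c, hc, hmax⟩ := Finset.exists_max_image _ (·.1.2) hS
  simp only [Finset.mem_filter, List.mem_toFinset, and_imp] at hb hmin hc hmax
  exact ⟨b, hb.1, hb.2, c, hc.1, hc.2, fun d hd hdY => ⟨hmin d hd hdY, hmax d hd hdY⟩⟩

theorem not_isOfFinOrder_of_freiheitssatz {N : Subgroup (FreeGroup A)} [N.Normal] (hxy : x ≠ y)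
    (h : Disjoint (letterSubgroup {y}ᶜ) N) :
    ¬ IsOfFinOrder (FreeGroup.of x : FreeGroup A ⧸ N) := by
  rw [isOfFinOrder_iff_pow_eq_one]
  rintro ⟨k, hk, hxk⟩
  have hpow : FreeGroup.of x ^ k = 1 :=
    disjoint_def.1 h (pow_mem (of_mem_letterSubgroup hxy) k) ((QuotientGroup.eq_one_iff _).1 hxk)
  exact not_isOfFinOrder_of x (isOfFinOrder_iff_pow_eq_one.2 ⟨k, hk, hpow⟩)

theorem isTorsionFree_quotient_map_inl {N H : Type*} [Group N] [Group H] {φ : H →* MulAut N}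
    (hH : IsTorsionFree H) {K : Subgroup N} [K.Normal] (hK : IsTorsionFree (N ⧸ K))
    {M : Subgroup (N ⋊[φ] H)} [M.Normal] (hM : M = K.map SemidirectProduct.inl) :
    IsTorsionFree ((N ⋊[φ] H) ⧸ M) := by
  rw [isTorsionFree_quotient_iff] at hK ⊢
  intro g k hk hg
  rw [hM] at hg ⊢
  obtain ⟨u, hu, hug⟩ := hg
  have hright : g.right = 1 := by
    refine hH _ (isOfFinOrder_iff_pow_eq_one.2 ⟨k, hk, ?_⟩)
    rw [← SemidirectProduct.rightHom_eq_right, ← map_pow, ← hug, SemidirectProduct.rightHom_inl]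
  obtain ⟨v, rfl⟩ : ∃ v, SemidirectProduct.inl v = g := ⟨g.left, by ext <;> simp [hright]⟩
  rw [← map_pow] at hug
  exact mem_map_of_mem _ (hK v k hk (SemidirectProduct.inl_injective hug ▸ hu))

section RewrittenRelators

variable [DecidableEq A]

theorem mem_rewrite_iff {q : ℚ} {b : (A × ℚ) × Bool} :
    b ∈ rewrite x f q L ↔ ∃ c ∈ rewrite x f 0 L, ((c.1.1, q + c.1.2), c.2) = b := by
  rw [← List.mem_map, ← rewrite_add, add_zero]

theorem exists_inl_eq_levelHom (h0 : weight f L = 0) {g : FreeGroup A}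
    (hg : g ∈ normalClosure {FreeGroup.mk L}) :
    ∃ u ∈ normalClosure (Set.range fun q : ℚ => FreeGroup.mk (rewrite x f q L)),
      SemidirectProduct.inl u = levelHom x f g := by
  have hle : normalClosure {FreeGroup.mk L} ≤
      (normalClosure {levelHom x f (FreeGroup.mk L)}).comap (levelHom x f) :=
    normalClosure_le_normal (Set.singleton_subset_iff.2 (subset_normalClosure rfl))
  rw [normalClosure_levelHom_mk h0] at hle
  exact hle hg

variable (hR : ∀ q, IsMagnusRelator (rewrite x f q L))
include hR

theorem isStaggered_rewrite {Y : Set A} {b c : (A × ℚ) × Bool} (hb : b ∈ rewrite x f 0 L)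
    (hbY : b.1.1 ∈ Y) (hc : c ∈ rewrite x f 0 L) (hcY : c.1.1 ∈ Y)
    (hY : ∀ d ∈ rewrite x f 0 L, d.1.1 ∈ Y → d.1.2 ∈ Set.Icc b.1.2 c.1.2) :
    IsStaggered (fun q => FreeGroup.mk (rewrite x f q L)) {b : A × ℚ | b.1 ∈ Y} Prod.snd
      (· + b.1.2) (· + c.1.2) := by
  have hdisjoint {q : ℚ} {d : (A × ℚ) × Bool} (hd : d ∈ rewrite x f 0 L) (hdY : d.1.1 ∈ Y)
      {I : Set ℚ} (hI : q + d.1.2 ∉ I) :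
      Disjoint (letterSubgroup (lettersIn {b : A × ℚ | b.1 ∈ Y} Prod.snd I))
        (normalClosure {FreeGroup.mk (rewrite x f q L)}) := by
    refine ((hR q).freiheitssatz _ (mem_rewrite_iff.2 ⟨d, hd, rfl⟩)).mono_left
      (letterSubgroup_mono ?_)
    rintro e he rfl
    exact hI (he hdY)
  refine ⟨fun p q h => add_lt_add_left h _, fun p q h => add_lt_add_left h _,
    fun q => add_le_add_right ((hY b hb hbY).2) q, fun q => mk_mem_letterSubgroup ?_,
    fun q => hdisjoint hc hcY Set.self_notMem_Iio, fun q => hdisjoint hb hbY Set.self_notMem_Ioi⟩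
  intro l hl hlY
  obtain ⟨d, hd, rfl⟩ := mem_rewrite_iff.1 hl
  obtain ⟨hlo, hhi⟩ := hY d hd hlY
  exact ⟨add_le_add_right hlo q, add_le_add_right hhi q⟩

theorem freiheitssatz_of_weight_eq_zero (hfx : f x = 1) (hf : ∀ a ≠ x, f a = 0)
    (hL : FreeGroup.IsCyclicallyReduced L) (h0 : weight f L = 0) (hx : ∃ l ∈ L, l.1 = x)
    (hy : ∃ l ∈ L, l.1 ≠ x) :
    Disjoint (letterSubgroup {x}ᶜ) (normalClosure {FreeGroup.mk L}) := by
  obtain ⟨d, hd, e, he, hde⟩ :=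
    exists_rewrite_level_ne (s := 0) (hfx ▸ one_ne_zero) hf hL h0 hx hy
  obtain ⟨b, hb, hbY, c, hc, hcY, hbc⟩ := exists_level_bounds (Y := Set.univ) ⟨d, hd, trivial⟩
  have hlt : b.1.2 < c.1.2 := by
    obtain ⟨hd₁, hd₂⟩ := hbc d hd trivial
    obtain ⟨he₁, he₂⟩ := hbc e he trivial
    by_contra! h
    exact hde (by linarith)
  have hst := isStaggered_rewrite hR hb hbY hc hcY hbc
  rw [disjoint_def]
  intro g hg hgN
  obtain ⟨u, hu, hgu⟩ := exists_inl_eq_levelHom h0 hgN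
  obtain ⟨v, hv, hgv⟩ := exists_levelHom_eq_inl hf hg
  obtain rfl : u = v := SemidirectProduct.inl_injective (hgu.trans hgv.symm)
  have hzero : u ∈ letterSubgroup (lettersIn {b : A × ℚ | b.1 ∈ Set.univ} Prod.snd {0}) :=
    letterSubgroup_mono (fun _ hb _ => hb) hv
  have hu1 : u = 1 := by
    refine disjoint_def.1 (hst.disjoint_normalClosure fun q => ?_) hzero hu
    simp only [Set.singleton_subset_iff, Set.mem_Iio, Set.mem_Ioi]
    by_contra! h
    linarith
  exact levelHom_injective hfx (by rw [← hgu, hu1, map_one, map_one])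

theorem freiheitssatz_of_ne (hf : f x = 1) (h0 : weight f L = 0) (hy : ∃ l ∈ L, l.1 = y)
    (hxy : x ≠ y) : Disjoint (letterSubgroup {y}ᶜ) (normalClosure {FreeGroup.mk L}) := by
  obtain ⟨l, hl, rfl⟩ := hy
  obtain ⟨d, hd, hdl⟩ := exists_mem_rewrite (f := f) (s := 0) hl hxy.symm
  obtain ⟨b, hb, hbY, c, hc, hcY, hbc⟩ := exists_level_bounds (Y := {l.1}) ⟨d, hd, hdl⟩
  have hst := isStaggered_rewrite hR hb hbY hc hcY hbc
  rw [disjoint_def]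
  intro g hg hgN
  obtain ⟨u, hu, hgu⟩ := exists_inl_eq_levelHom h0 hgN
  have huY : u ∈ letterSubgroup (lettersIn {b : A × ℚ | b.1 ∈ ({l.1} : Set A)} Prod.snd ∅) := by
    have hleft := levelHom_left_mem (x := x) (f := f) hg
    rw [← hgu, SemidirectProduct.left_inl] at hleft
    refine letterSubgroup_mono ?_ hleft
    exact fun b hb hbl => hb hbl
  have hu1 : u = 1 := disjoint_def.1
    (hst.disjoint_normalClosure fun q => .inl (Set.empty_subset _)) huY hu
  exact levelHom_injective hf (by rw [← hgu, hu1, map_one, map_one])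

theorem isTorsionFree_of_not_isProperPower (hf : f x = 1) (hL : FreeGroup.IsCyclicallyReduced L)
    (h0 : weight f L = 0) (hxy : ∃ l ∈ L, l.1 ≠ x)
    (hx : ¬ IsOfFinOrder (FreeGroup.of x : FreeGroup A ⧸ normalClosure {FreeGroup.mk L}))
    (hpow : ¬ IsProperPower (FreeGroup.mk L)) :
    IsTorsionFree (FreeGroup A ⧸ normalClosure {FreeGroup.mk L}) := by
  obtain ⟨l, hl, hlx⟩ := hxy
  obtain ⟨d, hd, -⟩ := exists_mem_rewrite (f := f) (s := 0) hl hlx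
  obtain ⟨b, hb, hbY, c, hc, hcY, hbc⟩ := exists_level_bounds (Y := Set.univ) ⟨d, hd, trivial⟩
  have hbase := (isStaggered_rewrite hR hb hbY hc hcY hbc).isTorsionFree_quotient fun q =>
    (hR q).isTorsionFree fun h => hpow (h.of_mk_rewrite hf hL h0)
  have hℚ : IsTorsionFree (Multiplicative ℚ) := fun q => (isOfFinOrder_iff_eq_one q).1
  refine (isTorsionFree_quotient_map_inl hℚ hbase
    (normalClosure_levelHom_mk h0)).quotient_of_ker_eq
    (f := (QuotientGroup.mk' _).comp (levelHom x f)) ?_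
  rw [← MonoidHom.comap_ker, QuotientGroup.ker_mk', comap_levelHom_normalClosure hf hx]

theorem root_notMem_of_rewrite (hf : f x = 1) (hL : FreeGroup.IsCyclicallyReduced L)
    (h0 : weight f L = 0) (hxy : ∃ l ∈ L, l.1 ≠ x) {r : FreeGroup A} {n : ℕ} (hn : 2 ≤ n)
    (hr : FreeGroup.mk L = r ^ n) : r ∉ normalClosure {FreeGroup.mk L} := by
  obtain ⟨l, hl, hlx⟩ := hxy
  obtain ⟨d, hd, -⟩ := exists_mem_rewrite (f := f) (s := 0) hl hlx
  obtain ⟨b, hb, hbY, c, hc, hcY, hbc⟩ := exists_level_bounds (Y := Set.univ) ⟨d, hd, trivial⟩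
  have hst := isStaggered_rewrite hR hb hbY hc hcY hbc
  intro hrN
  obtain ⟨u, hu, hur⟩ := exists_inl_eq_levelHom h0 hrN
  have hpow : FreeGroup.mk (rewrite x f 0 L) = u ^ n := by
    apply SemidirectProduct.inl_injective (φ := shift A)
    rw [map_pow, hur, ← map_pow, ← hr, levelHom_mk h0]
  have hword := eq_flatten_replicate_toWord
    (isCyclicallyReduced_rewrite (hf ▸ one_ne_zero) hL h0) (by omega) hpow
  have hIcc : u ∈ letterSubgroup (lettersIn {b : A × ℚ | b.1 ∈ Set.univ} Prod.snd
      (Set.Icc (0 + b.1.2) (0 + c.1.2))) := by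
    rw [← FreeGroup.mk_toWord (x := u)]
    refine mk_mem_letterSubgroup fun d hd _ => ?_
    rw [zero_add, zero_add]
    refine hbc d ?_ trivial
    rw [hword]
    exact List.mem_flatten_of_mem (List.mem_replicate.2 ⟨by omega, rfl⟩) hd
  exact (hR 0).root_notMem u n hn hpow (hst.inf_normalClosure_le 0 ⟨hIcc, hu⟩)

end RewrittenRelators

theorem weight_add_smul (f g : A → ℚ) (c : ℚ) :
    weight (f + c • g) L = weight f L + c * weight g L := by
  induction L with
  | nil => simp
  | cons l L ih =>
    simp only [weight_cons, ih, letterWeight, Pi.add_apply, Pi.smul_apply, smul_eq_mul]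
    split_ifs <;> ring

theorem exists_weight_eq_zero [DecidableEq A] (hxy : x ≠ y) (hy : weight (Pi.single y 1) L ≠ 0) :
    ∃ f : A → ℚ, f x = 1 ∧ weight f L = 0 := by
  refine ⟨Pi.single x 1 + (-(weight (Pi.single x 1) L / weight (Pi.single y 1) L)) •
    Pi.single y 1, by simp [hxy], ?_⟩
  rw [weight_add_smul, neg_mul, div_mul_cancel₀ _ hy, add_neg_cancel]

theorem exists_fst_ne (hxy : y ≠ x) : (∃ l ∈ L, l.1 = y) → ∃ l ∈ L, l.1 ≠ x :=
  fun ⟨l, hl, hly⟩ => ⟨l, hl, hly.trans_ne hxy⟩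

section Shorter

variable (hL : FreeGroup.IsCyclicallyReduced L)
  (hshorter : ∀ R : List ((A × ℚ) × Bool), R.length < L.length → FreeGroup.IsCyclicallyReduced R →
    R ≠ [] → IsMagnusRelator R)
include hL hshorter

theorem isMagnusRelator_rewrite [DecidableEq A] (hf : f x = 1) (h0 : weight f L = 0)
    (hx : ∃ l ∈ L, l.1 = x) (hxy : ∃ l ∈ L, l.1 ≠ x) (q : ℚ) :
    IsMagnusRelator (rewrite x f q L) := by
  obtain ⟨l, hl, hlx⟩ := hxy
  obtain ⟨b, hb, -⟩ := exists_mem_rewrite (f := f) (s := q) hl hlx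
  exact hshorter _ (length_rewrite_lt hx) (isCyclicallyReduced_rewrite (hf ▸ one_ne_zero) hL h0)
    (List.ne_nil_of_mem hb)

theorem freiheitssatz_of_shorter (hy : ∃ l ∈ L, l.1 = y) (hne : ∃ l ∈ L, l.1 ≠ y) :
    Disjoint (letterSubgroup {y}ᶜ) (normalClosure {FreeGroup.mk L}) := by
  classical
  by_cases h0 : weight (Pi.single y 1) L = 0
  · have hfy : (Pi.single y 1 : A → ℚ) y = 1 := Pi.single_eq_same y 1
    exact freiheitssatz_of_weight_eq_zero (isMagnusRelator_rewrite hL hshorter hfy h0 hy hne) hfy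
      (fun a ha => Pi.single_eq_of_ne ha 1) hL h0 hy hne
  · obtain ⟨l, hl, hly⟩ := hne
    obtain ⟨f, hf, h0⟩ := exists_weight_eq_zero hly h0
    have hnex := exists_fst_ne hly.symm hy
    have hR := isMagnusRelator_rewrite hL hshorter hf h0 ⟨l, hl, rfl⟩ hnex
    exact freiheitssatz_of_ne hR hf h0 hy hly

theorem isMagnusRelator_of_shorter (hxy : x ≠ y) (hx : ∃ l ∈ L, l.1 = x) (hy : ∃ l ∈ L, l.1 = y) :
    IsMagnusRelator L := by
  classical
  wlog h : ∃ f : A → ℚ, f x = 1 ∧ weight f L = 0 generalizing x y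
  · have h0 : weight (Pi.single y 1) L = 0 := by
      by_contra h0
      exact h (exists_weight_eq_zero hxy h0)
    exact this hxy.symm hy hx ⟨Pi.single y 1, Pi.single_eq_same y 1, h0⟩
  obtain ⟨f, hf, h0⟩ := h
  have hnex := exists_fst_ne hxy.symm hy
  have hney := exists_fst_ne hxy hx
  have hR := isMagnusRelator_rewrite hL hshorter hf h0 hx hnex
  have hfree := freiheitssatz_of_shorter hL hshorter hy hney
  refine ⟨fun l hl => freiheitssatz_of_shorter hL hshorter ⟨l, hl, rfl⟩ ?_,
    isTorsionFree_of_not_isProperPower hR hf hL h0 hnex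
      (not_isOfFinOrder_of_freiheitssatz hxy hfree),
    fun r n hn hr => root_notMem_of_rewrite hR hf hL h0 hnex hn hr⟩
  rcases eq_or_ne l.1 x with hlx | hlx
  · exact hlx ▸ hnex
  · exact exists_fst_ne hlx.symm hx

end Shorter

end Induction

theorem isMagnusRelator {A : Type u} {L : List (A × Bool)}
    (hL : FreeGroup.IsCyclicallyReduced L) (hne : L ≠ []) : IsMagnusRelator L := by
  induction hn : L.length using Nat.strong_induction_on generalizing A with
  | _ n ih =>
    subst hn
    obtain ⟨l, hl⟩ := List.exists_mem_of_ne_nil L hne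
    by_cases hx : ∀ m ∈ L, m.1 = l.1
    · exact isMagnusRelator_of_forall_eq hL.isReduced hne hx
    · push Not at hx
      obtain ⟨m, hm, hml⟩ := hx
      exact isMagnusRelator_of_shorter hL (fun R hR hRc hRne => ih _ hR hRc hRne rfl) hml
        ⟨m, hm, rfl⟩ ⟨l, hl, rfl⟩

theorem normalClosure_singleton_eq_of_isConj {G : Type*} [Group G] {g h : G} (hgh : IsConj g h) :
    normalClosure {g} = normalClosure {h} := by
  simp [normalClosure, Group.conjugatesOfSet, isConj_iff_conjugatesOf_eq.1 hgh]

theorem isProperPower_map_iff {G H : Type*} [Monoid G] [Monoid H] (e : G ≃* H) {g : G} :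
    IsProperPower (e g) ↔ IsProperPower g := by
  simp only [IsProperPower, e.surjective.exists, ← map_pow, e.injective.eq_iff]

theorem exists_isCyclicallyReduced_conj {A : Type*} (w : FreeGroup A) :
    ∃ (c : FreeGroup A) (L : List (A × Bool)), FreeGroup.IsCyclicallyReduced L ∧
      MulAut.conj c (FreeGroup.mk L) = w := by
  classical
  refine ⟨.mk (FreeGroup.reduceCyclically.conjugator w.toWord), FreeGroup.reduceCyclically w.toWord,
    FreeGroup.reduceCyclically.isCyclicallyReduced FreeGroup.isReduced_toWord, ?_⟩
  rw [MulAut.conj_apply, FreeGroup.inv_mk, FreeGroup.mul_mk, FreeGroup.mul_mk,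
    FreeGroup.reduceCyclically.conj_conjugator_reduceCyclically, FreeGroup.mk_toWord]

theorem isTorsionFree_quotient_iff_not_isProperPower {A : Type*} {w : FreeGroup A} (hw : w ≠ 1) :
    IsTorsionFree (FreeGroup A ⧸ normalClosure {w}) ↔ ¬ IsProperPower w := by
  obtain ⟨c, L, hL, rfl⟩ := exists_isCyclicallyReduced_conj w
  have hne : L ≠ [] := by
    rintro rfl
    exact hw (map_one _)
  have hL := isMagnusRelator hL hne
  rw [isProperPower_map_iff, isTorsionFree_quotient_iff, MulAut.conj_apply,
    ← normalClosure_singleton_eq_of_isConj (isConj_iff.2 ⟨c, rfl⟩), ← isTorsionFree_quotient_iff]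
  refine ⟨?_, hL.isTorsionFree⟩
  rintro h ⟨r, n, hn, hr⟩
  refine hL.root_notMem r n hn hr (isTorsionFree_quotient_iff.1 h r n (by omega) ?_)
  exact hr ▸ subset_normalClosure (Set.mem_singleton _)

end OneRelator

theorem one_relator_torsion_iff_proper_power_general {A : Type*} (w : FreeGroup A) (hw : w ≠ 1) :
    (∃ g : PresentedGroup ({w} : Set (FreeGroup A)),
        g ≠ 1 ∧ ∃ k : ℕ, 1 ≤ k ∧ g ^ k = 1) ↔
      ∃ (r : FreeGroup A) (n : ℕ), 2 ≤ n ∧ w = r ^ n := by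
  have htorsion := (OneRelator.isTorsionFree_quotient_iff_not_isProperPower hw).symm
  refine Iff.trans ?_ (not_iff_comm.1 htorsion)
  simp only [OneRelator.IsTorsionFree, isOfFinOrder_iff_pow_eq_one, not_forall, exists_prop]
  exact exists_congr fun g => and_comm

/-- **Karrass–Magnus–Solitar (1960), torsion criterion:** the one-relator group
`⟨A ∣ w = 1⟩` has a nontrivial element of finite order if and only if `w` is a
proper power. -/
theorem one_relator_torsion_iff_proper_power {A : Type*} [DecidableEq A]
    (w : FreeGroup A) (hw : w ≠ 1) (hcyc : FreeGroup.CyclicallyReduced w) :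
    (∃ g : PresentedGroup ({w} : Set (FreeGroup A)),
        g ≠ 1 ∧ ∃ k : ℕ, 1 ≤ k ∧ g ^ k = 1) ↔
      ∃ (r : FreeGroup A) (n : ℕ), 2 ≤ n ∧ w = r ^ n :=
  one_relator_torsion_iff_proper_power_general w hw
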